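/- arXiv:2412.19280 — 2 statements merged into one kernel-verified Lean document; each statement's English description precedes it below -/
import Mathlib

section
/- Let G : ℓ^m → ℓ^r be strictly causal and let M : ℓ^r × ℓ^m → ℓ^m be causal–strictly-causal. Define S : ℓ^r × ℓ^m → ℓ^r × ℓ^m by S(v,d) = (β,δ), where (β,δ) is the unique solution of β = v + G(d − δ) − G(0) and δ = −M(β,δ). Then S is idempotent: S(S(v,d)) = S(v,d) for every (v,d) ∈ ℓ^r × ℓ^m. -/
/-!
If `(β, δ)` solves the equations with data `(v, d)`, then it also solves them with data `(β, δ)`: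
the first equation becomes `β = β + G 0 - G 0`, and the second does not involve the data. Hence
idempotence amounts to uniqueness of the solution. Eliminating `β` turns the equations into a fixed
point equation for `δ` under a strictly causal operator, and such an operator has at most one fixed
point, by induction on time.
-/

/-- Sequences with values in `ℝ^n` (with the Euclidean norm). -/
abbrev Traj (n : ℕ) : Type := ℕ → EuclideanSpace ℝ (Fin n)

/-- A causal operator on sequences. -/
def Causal {n m : ℕ} (A : Traj n → Traj m) : Prop :=
  ∀ (x x' : Traj n) (t : ℕ), (∀ s, s ≤ t → x s = x' s) → A x t = A x' t

/-- A strictly causal operator on sequences. -/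
def StrictlyCausal {n m : ℕ} (A : Traj n → Traj m) : Prop :=
  ∀ (x x' : Traj n) (t : ℕ), (∀ s, s < t → x s = x' s) → A x t = A x' t

/-- Causal in the first argument, strictly causal in the second argument. -/
def CausalSC {n q m : ℕ} (B : Traj n → Traj q → Traj m) : Prop :=
  ∀ (x x' : Traj n) (z z' : Traj q) (t : ℕ),
    (∀ s, s ≤ t → x s = x' s) → (∀ s, s < t → z s = z' s) → B x z t = B x' z' t

/-- Causal in both arguments. -/
def CausalCC {n q m : ℕ} (B : Traj n → Traj q → Traj m) : Prop :=
  ∀ (x x' : Traj n) (z z' : Traj q) (t : ℕ),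
    (∀ s, s ≤ t → x s = x' s) → (∀ s, s ≤ t → z s = z' s) → B x z t = B x' z' t

/-- Strictly causal in both arguments. -/
def CausalSS {n q m : ℕ} (B : Traj n → Traj q → Traj m) : Prop :=
  ∀ (x x' : Traj n) (z z' : Traj q) (t : ℕ),
    (∀ s, s < t → x s = x' s) → (∀ s, s < t → z s = z' s) → B x z t = B x' z' t

/-- Membership in `ℓ_p`: summability of `‖x t‖ ^ p`. -/
def InLp (p : ℝ) {E : Type*} [Norm E] (x : ℕ → E) : Prop :=
  Summable fun t => ‖x t‖ ^ p

/-- The `ℓ_p` norm `(∑ₜ ‖x t‖ ^ p) ^ (1/p)` of a sequence. -/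
noncomputable def lpSeqNorm (p : ℝ) {E : Type*} [Norm E] (x : ℕ → E) : ℝ :=
  (∑' t, ‖x t‖ ^ p) ^ (1 / p)

/-- The `ℝ^{r+m}`-valued sequence obtained by stacking `v` and `d`
(the norm of `(v t, d t)` is the Euclidean norm of the concatenated vector). -/
noncomputable def pairSeq {r m : ℕ} (v : Traj r) (d : Traj m) :
    ℕ → WithLp 2 (EuclideanSpace ℝ (Fin r) × EuclideanSpace ℝ (Fin m)) :=
  fun t => (WithLp.equiv 2 _).symm (v t, d t)

/-- An exponentially decaying sequence: `‖x t‖ ≤ k · α ^ t` with `k > 0`, `α ∈ (0,1)`. -/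
def ExpDecay {E : Type*} [Norm E] (x : ℕ → E) : Prop :=
  ∃ k : ℝ, 0 < k ∧ ∃ α : ℝ, 0 < α ∧ α < 1 ∧ ∀ t, ‖x t‖ ≤ k * α ^ t

/-- Strict causality for operators between families over a preordered time set: the output at
time `t` depends only on the input before `t`. For `ι = ℕ` and Euclidean values this is
`StrictlyCausal`. -/
def IsStrictlyCausal {ι α β : Type*} [Preorder ι] (A : (ι → α) → ι → β) : Prop :=
  ∀ (x x' : ι → α) (t : ι), (∀ s, s < t → x s = x' s) → A x t = A x' t

/-- Operators of two families over a preordered time set that are causal in the first and strictly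
causal in the second. For `ι = ℕ` and Euclidean values this is `CausalSC`. -/
def IsCausalStrictlyCausal {ι α β γ : Type*} [Preorder ι]
    (B : (ι → α) → (ι → β) → ι → γ) : Prop :=
  ∀ (x x' : ι → α) (z z' : ι → β) (t : ι),
    (∀ s, s ≤ t → x s = x' s) → (∀ s, s < t → z s = z' s) → B x z t = B x' z' t

/-- The operator on `δ` obtained from `δ ↦ -M β δ` by eliminating `β` through the equation
`β = v + G (d - δ) - G 0`, where `p = (v, d)`. -/
def reducedFeedback {ι E F : Type*} [AddGroup E] [AddGroup F]
    (G : (ι → F) → ι → E) (M : (ι → E) → (ι → F) → ι → F) (p : (ι → E) × (ι → F))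
    (δ : ι → F) : ι → F :=
  -M (p.1 + G (p.2 - δ) - G 0) δ

/-- `q = (β, δ)` is a solution of the feedback equations `β = v + G (d - δ) - G 0`,
`δ = -M β δ` with data `p = (v, d)`. -/
structure IsFeedbackSolution {ι E F : Type*} [AddGroup E] [AddGroup F]
    (G : (ι → F) → ι → E) (M : (ι → E) → (ι → F) → ι → F) (p q : (ι → E) × (ι → F)) : Prop where
  fst_eq : q.1 = p.1 + G (p.2 - q.2) - G 0
  snd_eq : q.2 = -M q.1 q.2

section Causality

variable {ι α β γ : Type*} [Preorder ι]

namespace IsStrictlyCausal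

theorem comp_pointwise {A : (ι → β) → ι → γ} (hA : IsStrictlyCausal A) (f : ι → α → β) :
    IsStrictlyCausal fun x : ι → α => A fun t => f t (x t) :=
  fun _ _ t hx => hA _ _ t fun s hs => congrArg (f s) (hx s hs)

theorem pointwise_comp {A : (ι → α) → ι → β} (hA : IsStrictlyCausal A) (f : ι → β → γ) :
    IsStrictlyCausal fun x t => f t (A x t) :=
  fun x x' t hx => congrArg (f t) (hA x x' t hx)

theorem eq_of_isFixedPt [WellFoundedLT ι] {A : (ι → α) → ι → α} (hA : IsStrictlyCausal A)
    {x y : ι → α} (hx : Function.IsFixedPt A x) (hy : Function.IsFixedPt A y) : x = y := by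
  funext t
  induction t using WellFoundedLT.induction with
  | ind t ih =>
    calc
      x t = A x t := (congrFun hx t).symm
      _ = A y t := hA x y t ih
      _ = y t := congrFun hy t

end IsStrictlyCausal

theorem IsCausalStrictlyCausal.comp_left {B : (ι → α) → (ι → β) → ι → γ}
    (hB : IsCausalStrictlyCausal B) {A : (ι → β) → ι → α} (hA : IsStrictlyCausal A) :
    IsStrictlyCausal fun z => B (A z) z :=
  fun z z' t hz =>
    hB _ _ z z' t (fun s hs => hA z z' s fun u hu => hz u (hu.trans_le hs)) hz

end Causality

section Feedback

variable {ι E F : Type*} [AddGroup E] [AddGroup F]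
  {G : (ι → F) → ι → E} {M : (ι → E) → (ι → F) → ι → F}

theorem isStrictlyCausal_reducedFeedback [Preorder ι] (hG : IsStrictlyCausal G)
    (hM : IsCausalStrictlyCausal M) (p : (ι → E) × (ι → F)) :
    IsStrictlyCausal (reducedFeedback G M p) := by
  have hβ : IsStrictlyCausal fun δ => p.1 + G (p.2 - δ) - G 0 :=
    (hG.comp_pointwise fun t y => p.2 t - y).pointwise_comp fun t y => p.1 t + y - G 0 t
  exact (hM.comp_left hβ).pointwise_comp fun _ y => -y

namespace IsFeedbackSolution

theorem self {p q : (ι → E) × (ι → F)} (h : IsFeedbackSolution G M p q) :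
    IsFeedbackSolution G M q q where
  fst_eq := by rw [sub_self, add_sub_cancel_right]
  snd_eq := h.snd_eq

theorem isFixedPt_snd {p q : (ι → E) × (ι → F)} (h : IsFeedbackSolution G M p q) :
    Function.IsFixedPt (reducedFeedback G M p) q.2 := by
  rw [Function.IsFixedPt, reducedFeedback, ← h.fst_eq, ← h.snd_eq]

theorem unique [Preorder ι] [WellFoundedLT ι] (hG : IsStrictlyCausal G)
    (hM : IsCausalStrictlyCausal M)
    {p q q' : (ι → E) × (ι → F)} (hq : IsFeedbackSolution G M p q)
    (hq' : IsFeedbackSolution G M p q') : q = q' := by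
  have hδ : q.2 = q'.2 :=
    (isStrictlyCausal_reducedFeedback hG hM p).eq_of_isFixedPt hq.isFixedPt_snd hq'.isFixedPt_snd
  have hβ : q.1 = q'.1 := by rw [hq.fst_eq, hq'.fst_eq, hδ]
  exact Prod.ext hβ hδ

end IsFeedbackSolution

theorem statement7_general [Preorder ι] [WellFoundedLT ι]
    (hG : IsStrictlyCausal G) (hM : IsCausalStrictlyCausal M)
    {S : (ι → E) × (ι → F) → (ι → E) × (ι → F)} (hS : ∀ p, IsFeedbackSolution G M p (S p))
    (p : (ι → E) × (ι → F)) : S (S p) = S p :=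
  (hS (S p)).unique hG hM (hS p).self

end Feedback

/-- the solution operator `S : (v,d) ↦ (β,δ)` of the fixed-point equations
`β = v + G(d − δ) − G(0)`, `δ = −M(β,δ)` is idempotent. -/
theorem statement7 {r m : ℕ} (G : Traj m → Traj r) (M : Traj r → Traj m → Traj m)
    (hG : StrictlyCausal G) (hM : CausalSC M)
    (S : Traj r × Traj m → Traj r × Traj m)
    (hS : ∀ (v : Traj r) (d : Traj m),
      (S (v, d)).1 = v + G (d - (S (v, d)).2) - G 0 ∧
      (S (v, d)).2 = -(M (S (v, d)).1 (S (v, d)).2)) :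
    ∀ (v : Traj r) (d : Traj m), S (S (v, d)) = S (v, d) :=
  fun v d => statement7_general hG hM (fun p => ⟨(hS p.1 p.2).1, (hS p.1 p.2).2⟩) (v, d)
end

section
/- Let p be a real number with 1 ≤ p < ∞. Let G̃ : ℓ^m → ℓ^r (the true plant) be strictly causal, ℓ_p-stable, and incrementally finite-gain ℓ_p-stable with incremental gain γ_{G̃}, and let G : ℓ^m → ℓ^r (the nominal model) be strictly causal. Assume the mismatch has finite ℓ_p-gain: there exists γ_Δ > 0 such that ‖G̃ u − G u‖_p ≤ γ_Δ ‖u‖_p for all u ∈ ℓ_p^m. Let Q : ℓ^r → ℓ^m be causal with finite ℓ_p-gain γ_Q (i.e., ‖Q ω‖_p ≤ γ_Q ‖ω‖_p for all ω ∈ ℓ_p^r), and suppose γ_Q γ_Δ < 1. Consider the closed loop with the internal-model controller built from G applied to the plant G̃: for each (v,d) ∈ ℓ^r × ℓ^m, the unique signals with u° = Q ω, ω = y − G u°, y = G̃(u° + d) + v. Then for all v ∈ ℓ_p^r and d ∈ ℓ_p^m, the closed loop is stable: ω ∈ ℓ_p^r with ‖ω‖_p ≤ (1 − γ_Δ γ_Q)^{-1}(γ_{G̃}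 ‖d‖_p + ‖v‖_p), u° ∈ ℓ_p^m, and y ∈ ℓ_p^r. -/
/-!
The loop equations give `ω = (G̃ (u° + d) - G̃ u°) + (G̃ - G) u° + v` with `u° = Q ω`. Nothing is
known a priori about the size of `ω`, so one works with the truncations `P_T ω`, which always lie
in `ℓ_p`; by causality, gains on `ℓ_p` are also gains between truncated signals. Hence
`‖P_T ω‖ ≤ γ_Δ γ_Q ‖P_T ω‖ + γ_G̃ ‖d‖ + ‖v‖`, and the small-gain condition bounds `‖P_T ω‖`
uniformly in `T`.
-/

lemma le_inv_one_sub_mul_of_le_mul_add {a b c : ℝ} (ha : a < 1) (h : b ≤ a * b + c) :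
    b ≤ (1 - a)⁻¹ * c := by
  rw [le_inv_mul_iff₀ (sub_pos.2 ha)]
  linarith

section Signals

variable {E F : Type*} [SeminormedAddCommGroup E] [SeminormedAddCommGroup F]
  {p : ℝ} {x y : ℕ → E}

lemma tsum_norm_rpow_nonneg (p : ℝ) (x : ℕ → E) : 0 ≤ ∑' t, ‖x t‖ ^ p :=
  tsum_nonneg fun _ => by positivity

lemma lpSeqNorm_nonneg (p : ℝ) (x : ℕ → E) : 0 ≤ lpSeqNorm p x :=
  Real.rpow_nonneg (tsum_norm_rpow_nonneg p x) _

lemma lpSeqNorm_rpow (hp : p ≠ 0) (x : ℕ → E) : lpSeqNorm p x ^ p = ∑' t, ‖x t‖ ^ p := by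
  rw [lpSeqNorm, one_div, Real.rpow_inv_rpow (tsum_norm_rpow_nonneg p x) hp]

lemma InLp.mono {z : ℕ → F} (hp : 0 ≤ p) (hz : InLp p z) (h : ∀ t, ‖x t‖ ≤ ‖z t‖) : InLp p x :=
  Summable.of_nonneg_of_le (fun _ => by positivity)
    (fun t => Real.rpow_le_rpow (norm_nonneg _) (h t) hp) hz

lemma lpSeqNorm_mono {z : ℕ → F} (hp : 0 ≤ p) (hz : InLp p z) (h : ∀ t, ‖x t‖ ≤ ‖z t‖) :
    lpSeqNorm p x ≤ lpSeqNorm p z := by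
  have h_rpow (t : ℕ) : ‖x t‖ ^ p ≤ ‖z t‖ ^ p := Real.rpow_le_rpow (norm_nonneg _) (h t) hp
  exact Real.rpow_le_rpow (tsum_norm_rpow_nonneg p x)
    (Summable.tsum_le_tsum h_rpow (hz.mono hp h) hz) (by positivity)

lemma inLp_norm_add_norm (hp : 1 ≤ p) (hx : InLp p x) (hy : InLp p y) :
    InLp p fun t => ‖x t‖ + ‖y t‖ := by
  have h := Real.summable_Lp_add_of_nonneg hp (fun t => norm_nonneg (x t))
    (fun t => norm_nonneg (y t)) hx hy
  exact h.congr fun t => by rw [Real.norm_of_nonneg (by positivity)]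

lemma norm_add_apply_le_norm_norm_add_norm (x y : ℕ → E) (t : ℕ) :
    ‖(x + y) t‖ ≤ ‖‖x t‖ + ‖y t‖‖ :=
  (norm_add_le _ _).trans (Real.le_norm_self _)

lemma InLp.add (hp : 1 ≤ p) (hx : InLp p x) (hy : InLp p y) : InLp p (x + y) :=
  (inLp_norm_add_norm hp hx hy).mono (zero_le_one.trans hp)
    (norm_add_apply_le_norm_norm_add_norm x y)

lemma lpSeqNorm_add_le (hp : 1 ≤ p) (hx : InLp p x) (hy : InLp p y) :
    lpSeqNorm p (x + y) ≤ lpSeqNorm p x + lpSeqNorm p y :=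
  calc lpSeqNorm p (x + y)
      ≤ lpSeqNorm p fun t => ‖x t‖ + ‖y t‖ :=
        lpSeqNorm_mono (zero_le_one.trans hp) (inLp_norm_add_norm hp hx hy)
          (norm_add_apply_le_norm_norm_add_norm x y)
    _ = (∑' t, (‖x t‖ + ‖y t‖) ^ p) ^ (1 / p) := by
        simp only [lpSeqNorm, Real.norm_of_nonneg (add_nonneg (norm_nonneg _) (norm_nonneg _))]
    _ ≤ lpSeqNorm p x + lpSeqNorm p y :=
        Real.Lp_add_le_tsum_of_nonneg' hp (fun t => norm_nonneg (x t))
          (fun t => norm_nonneg (y t)) hx hy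

lemma InLp.sub (hp : 1 ≤ p) (hx : InLp p x) (hy : InLp p y) : InLp p (x - y) := by
  have hy_neg : InLp p (-y) := hy.mono (zero_le_one.trans hp) fun t => (norm_neg (y t)).le
  rw [sub_eq_add_neg]
  exact hx.add hp hy_neg

end Signals

/-- The truncation `P_T x` of a sequence, which keeps the samples at the times `t < T` and replaces
all later ones by `0`. -/
noncomputable def truncate {E : Type*} [Zero E] (T : ℕ) (x : ℕ → E) : ℕ → E :=
  (Set.Iio T).indicator x

section Truncation

variable {E : Type*} {p : ℝ}

lemma truncate_apply_of_lt [Zero E] {T t : ℕ} (ht : t < T) (x : ℕ → E) :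
    truncate T x t = x t :=
  Set.indicator_of_mem (Set.mem_Iio.2 ht) x

lemma truncate_add [AddZeroClass E] (T : ℕ) (x y : ℕ → E) :
    truncate T (x + y) = truncate T x + truncate T y :=
  Set.indicator_add' _ x y

lemma truncate_sub [AddGroup E] (T : ℕ) (x y : ℕ → E) :
    truncate T (x - y) = truncate T x - truncate T y :=
  Set.indicator_sub' _ x y

variable [SeminormedAddCommGroup E]

lemma norm_truncate_rpow_eq_indicator (hp : p ≠ 0) (T : ℕ) (x : ℕ → E) :
    (fun t => ‖truncate T x t‖ ^ p) =
      (Finset.range T : Set ℕ).indicator fun t => ‖x t‖ ^ p := by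
  ext t
  by_cases ht : t < T <;> simp [truncate, ht, Real.zero_rpow hp]

lemma inLp_truncate (hp : p ≠ 0) (T : ℕ) (x : ℕ → E) : InLp p (truncate T x) := by
  rw [InLp, norm_truncate_rpow_eq_indicator hp]
  exact (hasSum_sum_of_ne_finset_zero fun _ ht => Set.indicator_of_notMem ht _).summable

lemma lpSeqNorm_truncate_rpow (hp : p ≠ 0) (T : ℕ) (x : ℕ → E) :
    lpSeqNorm p (truncate T x) ^ p = ∑ t ∈ Finset.range T, ‖x t‖ ^ p := by
  rw [lpSeqNorm_rpow hp, norm_truncate_rpow_eq_indicator hp, sum_eq_tsum_indicator]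

lemma lpSeqNorm_truncate_le (hp : 0 ≤ p) (T : ℕ) {x : ℕ → E} (hx : InLp p x) :
    lpSeqNorm p (truncate T x) ≤ lpSeqNorm p x :=
  lpSeqNorm_mono hp hx fun _ => norm_indicator_le_norm_self _ _

lemma lpSeqNorm_truncate_add_le (hp : 1 ≤ p) (T : ℕ) (x y : ℕ → E) :
    lpSeqNorm p (truncate T (x + y)) ≤ lpSeqNorm p (truncate T x) + lpSeqNorm p (truncate T y) := by
  have hp₀ : p ≠ 0 := (zero_lt_one.trans_le hp).ne'
  rw [truncate_add]
  exact lpSeqNorm_add_le hp (inLp_truncate hp₀ T x) (inLp_truncate hp₀ T y)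

lemma sum_range_norm_rpow_le_of_truncate_le (hp : 0 < p) {x : ℕ → E} {C : ℝ}
    (h : ∀ T, lpSeqNorm p (truncate T x) ≤ C) (T : ℕ) :
    ∑ t ∈ Finset.range T, ‖x t‖ ^ p ≤ C ^ p := by
  rw [← lpSeqNorm_truncate_rpow hp.ne']
  exact Real.rpow_le_rpow (lpSeqNorm_nonneg p _) (h T) hp.le

lemma inLp_of_truncate_le (hp : 0 < p) {x : ℕ → E} {C : ℝ}
    (h : ∀ T, lpSeqNorm p (truncate T x) ≤ C) : InLp p x :=
  summable_of_sum_range_le (fun _ => by positivity) (sum_range_norm_rpow_le_of_truncate_le hp h)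

lemma lpSeqNorm_le_of_truncate_le (hp : 0 < p) {x : ℕ → E} {C : ℝ}
    (h : ∀ T, lpSeqNorm p (truncate T x) ≤ C) : lpSeqNorm p x ≤ C := by
  have hC : 0 ≤ C := (lpSeqNorm_nonneg p _).trans (h 0)
  rw [← Real.rpow_le_rpow_iff (lpSeqNorm_nonneg p x) hC hp, lpSeqNorm_rpow hp.ne']
  exact Real.tsum_le_of_sum_range_le (fun _ => by positivity)
    (sum_range_norm_rpow_le_of_truncate_le hp h)

end Truncation

/-- Causality of an operator on sequences with values in arbitrary types; on `Traj` this is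
`Causal`. -/
def IsCausal {X Y : Type*} (A : (ℕ → X) → ℕ → Y) : Prop :=
  ∀ (x x' : ℕ → X) (t : ℕ), (∀ s, s ≤ t → x s = x' s) → A x t = A x' t

/-- `ℓ_p`-stability of an operator: it maps `ℓ_p` into `ℓ_p`. -/
def IsLpStable {E F : Type*} [Norm E] [Norm F] (p : ℝ) (A : (ℕ → E) → ℕ → F) : Prop :=
  ∀ x, InLp p x → InLp p (A x)

/-- Finite `ℓ_p`-gain `γ` of an operator. As `lpSeqNorm` has a junk value outside `ℓ_p`, membership
of the output in `ℓ_p` is part of the definition. -/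
def HasLpGain {E F : Type*} [Norm E] [Norm F] (p γ : ℝ) (A : (ℕ → E) → ℕ → F) : Prop :=
  ∀ x, InLp p x → InLp p (A x) ∧ lpSeqNorm p (A x) ≤ γ * lpSeqNorm p x

/-- Incremental `ℓ_p`-gain bound `γ` of an operator. It is meaningful for an `IsLpStable` operator,
since `lpSeqNorm` has a junk value outside `ℓ_p`. -/
def HasIncrementalLpGain {E F : Type*} [SeminormedAddCommGroup E] [SeminormedAddCommGroup F]
    (p γ : ℝ) (A : (ℕ → E) → ℕ → F) : Prop :=
  ∀ x₁ x₂, InLp p x₁ → InLp p x₂ → lpSeqNorm p (A x₁ - A x₂) ≤ γ * lpSeqNorm p (x₁ - x₂)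

lemma StrictlyCausal.isCausal {n m : ℕ} {A : Traj n → Traj m} (hA : StrictlyCausal A) :
    IsCausal A :=
  fun x x' t h => hA x x' t fun s hs => h s hs.le

section Gains

lemma IsCausal.sub {X Y : Type*} [Sub Y] {A B : (ℕ → X) → ℕ → Y} (hA : IsCausal A)
    (hB : IsCausal B) : IsCausal (A - B) :=
  fun x x' t h => congrArg₂ (· - ·) (hA x x' t h) (hB x x' t h)

lemma IsCausal.truncate_map_truncate {X Y : Type*} [Zero X] [Zero Y] {A : (ℕ → X) → ℕ → Y}
    (hA : IsCausal A) (T : ℕ) (x : ℕ → X) : truncate T (A (truncate T x)) = truncate T (A x) :=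
  Set.indicator_congr fun t ht =>
    hA _ _ t fun _ hs => truncate_apply_of_lt (hs.trans_lt ht) x

variable {E F : Type*} [SeminormedAddCommGroup E] [SeminormedAddCommGroup F] {p γ : ℝ}
  {A : (ℕ → E) → ℕ → F}

lemma HasLpGain.lpSeqNorm_truncate_map_le (hp : 0 < p) (hγ : HasLpGain p γ A) (hA : IsCausal A)
    (T : ℕ) (x : ℕ → E) :
    lpSeqNorm p (truncate T (A x)) ≤ γ * lpSeqNorm p (truncate T x) := by
  obtain ⟨h_mem, h_gain⟩ := hγ _ (inLp_truncate hp.ne' T x)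
  rw [← hA.truncate_map_truncate]
  exact (lpSeqNorm_truncate_le hp.le T h_mem).trans h_gain

lemma HasIncrementalLpGain.lpSeqNorm_truncate_map_sub_map_le (hp : 1 ≤ p)
    (hγ : HasIncrementalLpGain p γ A) (h_stable : IsLpStable p A) (hA : IsCausal A)
    (T : ℕ) (x₁ x₂ : ℕ → E) :
    lpSeqNorm p (truncate T (A x₁ - A x₂)) ≤ γ * lpSeqNorm p (truncate T (x₁ - x₂)) := by
  have hp₀ : 0 < p := zero_lt_one.trans_le hp
  have h₁ := inLp_truncate hp₀.ne' T x₁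
  have h₂ := inLp_truncate hp₀.ne' T x₂
  rw [truncate_sub, truncate_sub, ← hA.truncate_map_truncate T x₁,
    ← hA.truncate_map_truncate T x₂, ← truncate_sub]
  exact (lpSeqNorm_truncate_le hp₀.le T ((h_stable _ h₁).sub hp (h_stable _ h₂))).trans
    (hγ _ _ h₁ h₂)

end Gains

section InternalModelLoop

variable {E F : Type*} [SeminormedAddCommGroup E] [SeminormedAddCommGroup F] {p γGt γΔ γQ : ℝ}
  {Gt G : (ℕ → E) → ℕ → F} {Q : (ℕ → F) → ℕ → E}

lemma lpSeqNorm_truncate_plant_sub_model_le (hp : 1 ≤ p) (hGt : IsCausal Gt)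
    (hGt_stable : IsLpStable p Gt) (hγGt : 0 ≤ γGt) (hGt_gain : HasIncrementalLpGain p γGt Gt)
    (hG : IsCausal G) (hΔ : HasLpGain p γΔ (Gt - G)) {v : ℕ → F} {d : ℕ → E} (hv : InLp p v)
    (hd : InLp p d) (u : ℕ → E) (T : ℕ) :
    lpSeqNorm p (truncate T (Gt (u + d) + v - G u)) ≤
      γGt * lpSeqNorm p d + γΔ * lpSeqNorm p (truncate T u) + lpSeqNorm p v := by
  have hp₀ : 0 < p := zero_lt_one.trans_le hp
  have h_split : Gt (u + d) + v - G u = (Gt (u + d) - Gt u) + (Gt - G) u + v := by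
    rw [Pi.sub_apply, sub_add_sub_cancel, add_sub_right_comm]
  have h_disturbance : lpSeqNorm p (truncate T (Gt (u + d) - Gt u)) ≤ γGt * lpSeqNorm p d :=
    calc lpSeqNorm p (truncate T (Gt (u + d) - Gt u))
        ≤ γGt * lpSeqNorm p (truncate T (u + d - u)) :=
          hGt_gain.lpSeqNorm_truncate_map_sub_map_le hp hGt_stable hGt T _ _
      _ = γGt * lpSeqNorm p (truncate T d) := by rw [add_sub_cancel_left]
      _ ≤ γGt * lpSeqNorm p d := by gcongr; exact lpSeqNorm_truncate_le hp₀.le T hd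
  have h_mismatch := hΔ.lpSeqNorm_truncate_map_le hp₀ (hGt.sub hG) T u
  have h_noise := lpSeqNorm_truncate_le hp₀.le T hv
  rw [h_split]
  exact (lpSeqNorm_truncate_add_le hp T _ _).trans (add_le_add
    ((lpSeqNorm_truncate_add_le hp T _ _).trans (add_le_add h_disturbance h_mismatch)) h_noise)

theorem statement14_general (hp : 1 ≤ p) (hGt : IsCausal Gt) (hGt_stable : IsLpStable p Gt)
    (hγGt : 0 ≤ γGt) (hGt_gain : HasIncrementalLpGain p γGt Gt) (hG : IsCausal G)
    (hγΔ : 0 ≤ γΔ) (hΔ : HasLpGain p γΔ (Gt - G)) (hQ : IsCausal Q)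
    (hQ_gain : HasLpGain p γQ Q) (h_small_gain : γQ * γΔ < 1)
    {v : ℕ → F} {d : ℕ → E} (hv : InLp p v) (hd : InLp p d) {y ω : ℕ → F} {u : ℕ → E}
    (hu : u = Q ω) (hω : ω = y - G u) (hy : y = Gt (u + d) + v) :
    InLp p ω ∧
      lpSeqNorm p ω ≤ (1 - γΔ * γQ)⁻¹ * (γGt * lpSeqNorm p d + lpSeqNorm p v) ∧
      InLp p u ∧ InLp p y := by
  have hp₀ : 0 < p := zero_lt_one.trans_le hp
  have h_loop_gain (T : ℕ) : lpSeqNorm p (truncate T ω) ≤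
      γΔ * γQ * lpSeqNorm p (truncate T ω) + (γGt * lpSeqNorm p d + lpSeqNorm p v) :=
    calc lpSeqNorm p (truncate T ω)
        = lpSeqNorm p (truncate T (Gt (u + d) + v - G u)) := by rw [← hy, ← hω]
      _ ≤ γGt * lpSeqNorm p d + γΔ * lpSeqNorm p (truncate T u) + lpSeqNorm p v :=
          lpSeqNorm_truncate_plant_sub_model_le hp hGt hGt_stable hγGt hGt_gain hG hΔ hv hd u T
      _ ≤ γGt * lpSeqNorm p d + γΔ * (γQ * lpSeqNorm p (truncate T ω)) + lpSeqNorm p v := by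
          gcongr
          exact hu ▸ hQ_gain.lpSeqNorm_truncate_map_le hp₀ hQ T ω
      _ = γΔ * γQ * lpSeqNorm p (truncate T ω) + (γGt * lpSeqNorm p d + lpSeqNorm p v) := by ring
  have h_bound (T : ℕ) := le_inv_one_sub_mul_of_le_mul_add
    (mul_comm γQ γΔ ▸ h_small_gain) (h_loop_gain T)
  have hω_mem : InLp p ω := inLp_of_truncate_le hp₀ h_bound
  have hu_mem : InLp p u := hu ▸ (hQ_gain ω hω_mem).1
  have hy_mem : InLp p y := hy ▸ (hGt_stable _ (hu_mem.add hp hd)).add hp hv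
  exact ⟨hω_mem, lpSeqNorm_le_of_truncate_le hp₀ h_bound, hu_mem, hy_mem⟩

end InternalModelLoop

/-- robustness of the internal-model controller under model mismatch with a
small-gain condition `γ_Q γ_Δ < 1`, with the explicit bound
`‖ω‖_p ≤ (1 − γ_Δ γ_Q)⁻¹ (γ_G̃ ‖d‖_p + ‖v‖_p)`. -/
theorem statement14 {r m : ℕ} (p : ℝ) (hp : 1 ≤ p)
    (Gt G : Traj m → Traj r) (Q : Traj r → Traj m)
    (γGt γΔ γQ : ℝ)
    (hGt : StrictlyCausal Gt)
    (hGtstab : ∀ u : Traj m, InLp p u → InLp p (Gt u))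
    (hγGt : 0 ≤ γGt)
    -- G̃ is incrementally finite-gain ℓ_p-stable with incremental gain γ_G̃
    (hGtifg : ∀ u₁ u₂ : Traj m, InLp p u₁ → InLp p u₂ →
      lpSeqNorm p (Gt u₁ - Gt u₂) ≤ γGt * lpSeqNorm p (u₁ - u₂))
    (hG : StrictlyCausal G)
    -- the mismatch has finite ℓ_p-gain γ_Δ > 0
    (hγΔ : 0 < γΔ)
    (hΔ : ∀ u : Traj m, InLp p u →
      InLp p (Gt u - G u) ∧ lpSeqNorm p (Gt u - G u) ≤ γΔ * lpSeqNorm p u)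
    (hQ : Causal Q)
    -- Q has finite ℓ_p-gain γ_Q
    (hγQ : 0 ≤ γQ)
    (hQgain : ∀ ω : Traj r, InLp p ω →
      InLp p (Q ω) ∧ lpSeqNorm p (Q ω) ≤ γQ * lpSeqNorm p ω)
    -- small-gain condition
    (hsg : γQ * γΔ < 1) :
    ∀ (v : Traj r) (d : Traj m), InLp p v → InLp p d →
      ∀ (y ω : Traj r) (u0 : Traj m),
        u0 = Q ω → ω = y - G u0 → y = Gt (u0 + d) + v →
        InLp p ω ∧
        lpSeqNorm p ω ≤ (1 - γΔ * γQ)⁻¹ * (γGt * lpSeqNorm p d + lpSeqNorm p v) ∧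
        InLp p u0 ∧ InLp p y := by
  intro v d hv hd y ω u0 hu hω hy
  exact statement14_general hp hGt.isCausal hGtstab hγGt hGtifg hG.isCausal hγΔ.le hΔ hQ hQgain
    hsg hv hd hu hω hy
end
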